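/- Let D be the open unit disk spanning the unit circle C in the xy-plane of ℝ³. If γ : [0,1] → ℝ³ \ C is a path disjoint from C with γ(0) = γ(1) that is disjoint from D as well, then γ is null-homotopic in ℝ³ \ C. -/

import Mathlib

/-!
A light source placed above (below) a flat closed ball illuminates an open region which is
star-shaped about the source, hence simply connected. The two regions cover the complement of the
ball, and they overlap in the points `(w, z)` with `‖w‖ > r * (1 + |z|)`, which form a path
connected set once the hyperplane has dimension at least two. By the van Kampen argument the
complement of the closed ball is simply connected: paths from a base point in the overlap that stay
in one region define a canonical homotopy class to each point, and following such a class by any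
path, cut into pieces lying in one region, gives the canonical class of its endpoint. So loops
avoiding the closed ball contract in its complement, a fortiori in that of the bounding sphere.
-/

open Set Metric Path

section VanKampen

variable {X : Type*} [TopologicalSpace X]

theorem isSimplyConnected_preimage_val {s t : Set X} (hst : s ⊆ t) (hs : IsSimplyConnected s) :
    IsSimplyConnected (Subtype.val ⁻¹' s : Set t) := by
  rwa [← Topology.IsEmbedding.subtypeVal.isSimplyConnected_image, Subtype.image_preimage_val,
    inter_eq_right.2 hst]

theorem homotopic_of_range_subset_isSimplyConnected {s : Set X} (hs : IsSimplyConnected s)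
    {x y : X} {p q : Path x y} (hp : range p ⊆ s) (hq : range q ⊆ s) : p.Homotopic q := by
  have := hs.simplyConnectedSpace
  have hx : x ∈ s := hp p.source_mem_range
  have hy : y ∈ s := hp p.target_mem_range
  let lift (r : Path x y) (hr : range r ⊆ s) : Path (⟨x, hx⟩ : s) ⟨y, hy⟩ :=
    { toFun := fun t ↦ ⟨r t, hr ⟨t, rfl⟩⟩
      source' := by simp
      target' := by simp }
  exact (SimplyConnectedSpace.paths_homotopic (lift p hp) (lift q hq)).map
    ⟨Subtype.val, continuous_subtype_val⟩

theorem pathClass_induction_of_isOpen_cover {ι : Type*} {U : ι → Set X} (hUo : ∀ i, IsOpen (U i))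
    (hU : ⋃ i, U i = univ) {P : ∀ ⦃x y : X⦄, Homotopic.Quotient x y → Prop}
    (refl : ∀ x, P (Homotopic.Quotient.refl x))
    (trans : ∀ {x y z} {p : Homotopic.Quotient x y} {q : Homotopic.Quotient y z},
      P p → P q → P (p.trans q))
    (mk_of_range_subset : ∀ {x y} (p : Path x y) i, range p ⊆ U i → P (Homotopic.Quotient.mk p))
    {x y : X} (p : Path x y) : P (Homotopic.Quotient.mk p) := by
  obtain ⟨t, t_zero, t_mono, ⟨N, t_eq_one⟩, t_cover⟩ :=
    exists_monotone_Icc_subset_open_cover_unitInterval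
      (fun i ↦ (hUo i).preimage p.continuous) (by simp [← preimage_iUnion, hU])
  have piece (n : ℕ) : P (Homotopic.Quotient.mk (p.subpath (t n) (t (n + 1)))) := by
    obtain ⟨i, hi⟩ := t_cover n
    apply mk_of_range_subset _ i
    rwa [p.range_subpath_of_le _ _ (t_mono n.le_succ), image_subset_iff]
  have initial (n : ℕ) : P (Homotopic.Quotient.mk (p.subpath 0 (t n))) := by
    induction n with
    | zero =>
      rw [t_zero, p.subpath_self]
      exact refl (p 0)
    | succ n ih =>
      rw [← Homotopic.Quotient.eq.2 ⟨.subpathTransSubpath p 0 (t n) (t (n + 1))⟩,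
        Homotopic.Quotient.mk_trans]
      exact trans ih (piece n)
  have of_cast : ∀ {x' y'} (hx : x' = x) (hy : y' = y), P (Homotopic.Quotient.mk (p.cast hx hy)) →
      P (Homotopic.Quotient.mk p) := by
    rintro _ _ rfl rfl h
    exact h
  apply of_cast p.source p.target
  rw [← p.subpath_zero_one, ← t_eq_one N le_rfl]
  exact initial N

variable {ι : Type*} {U : ι → Set X} {b : X}

theorem exists_pathClass_eq_of_range_subset (hU : ∀ i, IsSimplyConnected (U i))
    (hUU : ∀ i j, IsPathConnected (U i ∩ U j)) (hb : ∀ i, b ∈ U i) {x : X} (hx : ∃ i, x ∈ U i) :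
    ∃ c : Homotopic.Quotient b x, ∀ i, ∀ p : Path b x, range p ⊆ U i → .mk p = c := by
  obtain ⟨i, hxi⟩ := hx
  obtain ⟨p, hp⟩ := (hU i).isPathConnected.joinedIn b (hb i) x hxi
  refine ⟨Homotopic.Quotient.mk p, fun j q hq ↦ ?_⟩
  obtain ⟨r, hr⟩ := (hUU i j).joinedIn b ⟨hb i, hb j⟩ x ⟨hxi, hq q.target_mem_range⟩
  rw [← range_subset_iff, subset_inter_iff] at hr
  calc Homotopic.Quotient.mk q
    _ = Homotopic.Quotient.mk r := Homotopic.Quotient.eq.2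
      (homotopic_of_range_subset_isSimplyConnected (hU j) hq hr.2)
    _ = Homotopic.Quotient.mk p := Homotopic.Quotient.eq.2
      (homotopic_of_range_subset_isSimplyConnected (hU i) hr.1 (range_subset_iff.2 hp))

theorem simplyConnectedSpace_of_isOpen_cover (hUo : ∀ i, IsOpen (U i)) (hcover : ⋃ i, U i = univ)
    (hU : ∀ i, IsSimplyConnected (U i)) (hUU : ∀ i j, IsPathConnected (U i ∩ U j))
    (hb : ∀ i, b ∈ U i) : SimplyConnectedSpace X := by
  have hmem (x : X) : ∃ i, x ∈ U i := iUnion_eq_univ_iff.1 hcover x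
  choose c hc using fun x ↦ exists_pathClass_eq_of_range_subset hU hUU hb (hmem x)
  have trans_eq {x y : X} (p : Path x y) : (c x).trans (Homotopic.Quotient.mk p) = c y := by
    refine pathClass_induction_of_isOpen_cover hUo hcover
      (P := fun x y p ↦ (c x).trans p = c y) (by simp) ?_ ?_ p
    · rintro x y z p q hp hq
      rw [← Homotopic.Quotient.trans_assoc, hp, hq]
    · rintro x y p i hp
      obtain ⟨q, hq⟩ := (hU i).isPathConnected.joinedIn b (hb i) x (hp p.source_mem_range)
      rw [← range_subset_iff] at hq
      rw [← hc x i q hq, ← Homotopic.Quotient.mk_trans]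
      exact hc y i _ (by rw [Path.trans_range]; exact union_subset hq hp)
  have joined_base (x : X) : Joined b x := by
    obtain ⟨i, hi⟩ := hmem x
    exact ((hU i).isPathConnected.joinedIn b (hb i) x hi).joined
  rw [simply_connected_iff_paths_homotopic']
  refine ⟨⟨⟨b⟩, fun x y ↦ (joined_base x).symm.trans (joined_base y)⟩, fun {x y} p q ↦ ?_⟩
  rw [← Homotopic.Quotient.eq]
  calc Homotopic.Quotient.mk p
    _ = (c x).symm.trans ((c x).trans (Homotopic.Quotient.mk p)) := by
      simp [← Homotopic.Quotient.trans_assoc]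
    _ = (c x).symm.trans ((c x).trans (Homotopic.Quotient.mk q)) := by rw [trans_eq, trans_eq]
    _ = Homotopic.Quotient.mk q := by simp [← Homotopic.Quotient.trans_assoc]

theorem isSimplyConnected_iUnion [Nonempty ι] (hUo : ∀ i, IsOpen (U i))
    (hU : ∀ i, IsSimplyConnected (U i)) (hUU : ∀ i j, IsPathConnected (U i ∩ U j))
    (hb : ∀ i, b ∈ U i) : IsSimplyConnected (⋃ i, U i) := by
  have hbU : b ∈ ⋃ i, U i := mem_iUnion_of_mem (Classical.arbitrary ι) (hb _)
  refine simplyConnectedSpace_of_isOpen_cover (U := fun i ↦ Subtype.val ⁻¹' U i) (b := ⟨b, hbU⟩)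
    (fun i ↦ (hUo i).preimage continuous_subtype_val) ?_
    (fun i ↦ isSimplyConnected_preimage_val (subset_iUnion U i) (hU i))
    (fun i j ↦ (hUU i j).preimage_coe (inter_subset_left.trans (subset_iUnion U i))) hb
  rw [← preimage_iUnion, Subtype.coe_preimage_self]

theorem isSimplyConnected_union {U V : Set X} (hUo : IsOpen U) (hVo : IsOpen V)
    (hU : IsSimplyConnected U) (hV : IsSimplyConnected V) (hUV : IsPathConnected (U ∩ V)) :
    IsSimplyConnected (U ∪ V) := by
  obtain ⟨b, hbU, hbV⟩ := hUV.nonempty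
  rw [union_eq_iUnion]
  refine isSimplyConnected_iUnion (b := b) (Bool.forall_bool.2 ⟨hVo, hUo⟩)
    (Bool.forall_bool.2 ⟨hV, hU⟩) ?_ (Bool.forall_bool.2 ⟨hbV, hbU⟩)
  simp [hU.isPathConnected, hV.isPathConnected, hUV, inter_comm V U]

end VanKampen

section LitRegion

variable {W : Type*} [NormedAddCommGroup W] {r c : ℝ}

variable (W r c) in
/-- The part of the complement of `closedBall 0 r ×ˢ {0}` in `W × ℝ` illuminated by a light source
at `(0, c⁻¹)`, the ball casting a shadow on the other side of the hyperplane `W × {0}`. It is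
parametrized by the inverse height `c` of the source, and only meaningful for `c ≠ 0`. -/
def litRegion : Set (W × ℝ) := {x | 0 < c * x.2 ∨ r * (1 - c * x.2) < ‖x.1‖}

theorem isOpen_litRegion : IsOpen (litRegion W r c) :=
  (isOpen_lt (f := fun _ ↦ 0) (g := fun x : W × ℝ ↦ c * x.2) (by fun_prop) (by fun_prop)).union
    (isOpen_lt (f := fun x : W × ℝ ↦ r * (1 - c * x.2)) (g := fun x ↦ ‖x.1‖)
      (by fun_prop) (by fun_prop))

theorem source_mem_litRegion (hc : c ≠ 0) : (0, c⁻¹) ∈ litRegion W r c := by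
  left; simp [hc]

theorem litRegion_one_union_litRegion_neg_one :
    litRegion W r 1 ∪ litRegion W r (-1) = (closedBall 0 r ×ˢ {0})ᶜ := by
  ext ⟨w, z⟩
  obtain hz | rfl | hz := lt_trichotomy z 0
  · simp [litRegion, hz, hz.ne]
  · simp [litRegion]
  · simp [litRegion, hz, hz.ne']

theorem litRegion_one_inter_litRegion_neg_one (hr : 0 ≤ r) :
    litRegion W r 1 ∩ litRegion W r (-1) = {x | r * (1 + |x.2|) < ‖x.1‖} := by
  ext ⟨w, z⟩
  simp only [litRegion, mem_inter_iff, mem_ofPred_eq, one_mul, neg_one_mul, sub_neg_eq_add]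
  obtain hz | hz := le_total 0 z
  · rw [abs_of_nonneg hz]
    have : r * (1 - z) ≤ r * (1 + z) := by gcongr; linarith
    grind
  · rw [abs_of_nonpos hz]
    have : r * (1 + z) ≤ r * (1 - z) := by gcongr; linarith
    grind

variable [NormedSpace ℝ W]

theorem starConvex_litRegion (hc : c ≠ 0) : StarConvex ℝ (0, c⁻¹) (litRegion W r c) := by
  rintro ⟨w, z⟩ hx a b ha hb hab
  obtain rfl | hb := hb.eq_or_lt
  · obtain rfl : a = 1 := by simpa using hab
    simpa using source_mem_litRegion hc
  have height_eq : c * (a * c⁻¹ + b * z) = a + b * (c * z) := by field_simp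
  simp only [litRegion, mem_ofPred_eq, Prod.fst_add, Prod.snd_add, Prod.smul_mk, smul_zero,
    zero_add, smul_eq_mul, norm_smul, Real.norm_of_nonneg hb.le, height_eq] at hx ⊢
  refine hx.imp (fun hz ↦ by positivity) fun hw ↦ ?_
  calc r * (1 - (a + b * (c * z)))
    _ = b * (r * (1 - c * z)) := by linear_combination -r * hab
    _ < b * ‖w‖ := by gcongr

theorem isSimplyConnected_litRegion (hc : c ≠ 0) : IsSimplyConnected (litRegion W r c) :=
  have := (starConvex_litRegion hc).contractibleSpace ⟨_, source_mem_litRegion (W := W) (r := r) hc⟩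
  SimplyConnectedSpace.ofContractible (litRegion W r c)

theorem isPathConnected_setOf_lt_norm_fst {Y : Type*} [TopologicalSpace Y] [PathConnectedSpace Y]
    (hW : 1 < Module.rank ℝ W) {f : Y → ℝ} (hf : Continuous f) (hf₀ : ∀ y, 0 ≤ f y) :
    IsPathConnected {x : W × Y | f x.2 < ‖x.1‖} := by
  have hdomain : IsPathConnected (sphere (0 : W) 1 ×ˢ (Ioi (0 : ℝ) ×ˢ (univ : Set Y))) :=
    (isPathConnected_sphere hW 0 zero_le_one).prod
      (((convex_Ioi 0).isPathConnected nonempty_Ioi).prod isPathConnected_univ)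
  convert hdomain.image (f := fun x : W × ℝ × Y ↦ ((f x.2.2 + x.2.1) • x.1, x.2.2))
    (by fun_prop) using 1
  ext ⟨w, y⟩
  simp only [mem_ofPred_eq, mem_image, mem_prod, mem_sphere_zero_iff_norm, mem_Ioi, mem_univ,
    and_true, Prod.exists, Prod.mk.injEq]
  constructor
  · intro hw
    have hw₀ : ‖w‖ ≠ 0 := ((hf₀ y).trans_lt hw).ne'
    exact ⟨‖w‖⁻¹ • w, ‖w‖ - f y, y, ⟨by simp [norm_smul, hw₀], sub_pos.2 hw⟩,
      by simp [smul_smul, hw₀], rfl⟩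
  · rintro ⟨u, s, z, ⟨hu, hs⟩, rfl, rfl⟩
    rw [norm_smul, hu, mul_one, Real.norm_of_nonneg (by linarith [hf₀ z])]
    linarith

theorem isSimplyConnected_compl_closedBall_prod_zero (hW : 1 < Module.rank ℝ W) (hr : 0 ≤ r) :
    IsSimplyConnected (closedBall (0 : W) r ×ˢ {(0 : ℝ)})ᶜ := by
  rw [← litRegion_one_union_litRegion_neg_one]
  refine isSimplyConnected_union isOpen_litRegion isOpen_litRegion
    (isSimplyConnected_litRegion one_ne_zero)
    (isSimplyConnected_litRegion (neg_ne_zero.2 one_ne_zero)) ?_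
  rw [litRegion_one_inter_litRegion_neg_one hr]
  exact isPathConnected_setOf_lt_norm_fst hW (f := fun z : ℝ ↦ r * (1 + |z|)) (by fun_prop)
    fun z ↦ by positivity

end LitRegion

section Hyperplane

theorem one_lt_rank_ker {K V : Type*} [Field K] [AddCommGroup V] [Module K V] {f : V →ₗ[K] K}
    (hV : 2 < Module.rank K V) : 1 < Module.rank K f.ker := by
  have hquotient : Module.rank K (V ⧸ f.ker) ≤ 1 := by
    rw [← Cardinal.lift_le_one_iff, f.quotKerEquivRange.lift_rank_eq, Cardinal.lift_le_one_iff]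
    exact f.range.rank_le.trans_eq (CommSemiring.rank_self K)
  by_contra! hker
  refine hV.not_ge ?_
  calc Module.rank K V
    _ = Module.rank K (V ⧸ f.ker) + Module.rank K f.ker := f.ker.rank_quotient_add_rank.symm
    _ ≤ 1 + 1 := add_le_add hquotient hker
    _ = 2 := one_add_one_eq_two

variable {E : Type*} [NormedAddCommGroup E] [NormedSpace ℝ E] {f : E →L[ℝ] ℝ} {r : ℝ}

theorem isSimplyConnected_compl_closedBall_inter_ker (hE : 2 < Module.rank ℝ E) (hf : f ≠ 0)
    (hr : 0 ≤ r) : IsSimplyConnected (closedBall (0 : E) r ∩ f.ker)ᶜ := by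
  obtain ⟨v, hv⟩ : ∃ v, f v = 1 := f.toLinearMap.surjective (by exact_mod_cast hf) 1
  let e : E ≃L[ℝ] ℝ × f.ker := .equivOfRightInverse f (.toSpanSingleton ℝ v) fun a ↦ by simp [hv]
  let h : E ≃ₜ f.ker × ℝ := e.toHomeomorph.trans (Homeomorph.prodComm _ _)
  have hpreimage : h ⁻¹' (closedBall 0 r ×ˢ {0})ᶜ = (closedBall (0 : E) r ∩ f.ker)ᶜ := by
    rw [preimage_compl]
    congr 1
    ext x
    have hfst : (e x).1 = f x := rfl
    have hsnd : ‖(e x).2‖ = ‖x - f x • v‖ := rfl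
    suffices ‖x - f x • v‖ ≤ r ∧ f x = 0 ↔ ‖x‖ ≤ r ∧ f x = 0 by simpa [h, hfst, hsnd]
    exact and_congr_left fun hx ↦ by simp [hx]
  rw [← hpreimage, h.isSimplyConnected_preimage]
  exact isSimplyConnected_compl_closedBall_prod_zero (one_lt_rank_ker hE) hr

theorem stmt_17_general (hE : 2 < Module.rank ℝ E) (hf : f ≠ 0) (hr : 0 ≤ r)
    {C D : Set E} (hC : C = {x | ‖x‖ = r ∧ f x = 0}) (hD : D = {x | ‖x‖ < r ∧ f x = 0})
    {x₀ : ↥(Cᶜ)} (γ : Path x₀ x₀) (hdisj : ∀ t, (γ t : E) ∉ D) :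
    γ.Homotopic (Path.refl x₀) := by
  have hCD : (C ∪ D)ᶜ = (closedBall (0 : E) r ∩ f.ker)ᶜ := by
    ext x
    simp [hC, hD, le_iff_eq_or_lt, or_and_right]
  have hsc : IsSimplyConnected (Subtype.val ⁻¹' (C ∪ D)ᶜ : Set ↥Cᶜ) :=
    isSimplyConnected_preimage_val (compl_subset_compl.2 subset_union_left)
      (hCD ▸ isSimplyConnected_compl_closedBall_inter_ker hE hf hr)
  have hγ : range γ ⊆ Subtype.val ⁻¹' (C ∪ D)ᶜ := by
    rintro _ ⟨t, rfl⟩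
    exact not_or_intro (γ t).2 (hdisj t)
  refine homotopic_of_range_subset_isSimplyConnected hsc hγ ?_
  rw [Path.refl_range, singleton_subset_iff]
  exact hγ γ.source_mem_range

end Hyperplane

section EuclideanSpace

theorem two_lt_rank_euclideanSpace_fin_three : 2 < Module.rank ℝ (EuclideanSpace ℝ (Fin 3)) := by
  rw [← Module.finrank_eq_rank, finrank_euclideanSpace_fin]
  norm_num

theorem euclideanSpace_proj_ne_zero {𝕜 ι : Type*} [RCLike 𝕜] (i : ι) :
    (EuclideanSpace.proj i : EuclideanSpace 𝕜 ι →L[𝕜] 𝕜) ≠ 0 := by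
  classical
  intro h
  have h_single := DFunLike.congr_fun h (EuclideanSpace.single i 1)
  simp at h_single

variable {x : EuclideanSpace ℝ (Fin 3)}

theorem norm_sq_eq_of_apply_two_eq_zero (hx : x 2 = 0) : ‖x‖ ^ 2 = x 0 ^ 2 + x 1 ^ 2 := by
  simp [EuclideanSpace.real_norm_sq_eq, Fin.sum_univ_three, hx]

theorem sq_add_sq_eq_one_iff_norm_eq_one (hx : x 2 = 0) : x 0 ^ 2 + x 1 ^ 2 = 1 ↔ ‖x‖ = 1 := by
  rw [← norm_sq_eq_of_apply_two_eq_zero hx, pow_eq_one_iff_of_nonneg (norm_nonneg x) two_ne_zero]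

theorem sq_add_sq_lt_one_iff_norm_lt_one (hx : x 2 = 0) : x 0 ^ 2 + x 1 ^ 2 < 1 ↔ ‖x‖ < 1 := by
  rw [← norm_sq_eq_of_apply_two_eq_zero hx, sq_lt_one_iff₀ (norm_nonneg x)]

end EuclideanSpace

/-- If a loop in ℝ³ is disjoint from the unit circle C in the xy-plane and also
disjoint from its open spanning disk D, then it is null-homotopic in ℝ³ \ C. -/
theorem stmt_17
    (C : Set (EuclideanSpace ℝ (Fin 3)))
    (hC : C = {x : EuclideanSpace ℝ (Fin 3) | x 0 ^ 2 + x 1 ^ 2 = 1 ∧ x 2 = 0})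
    (D : Set (EuclideanSpace ℝ (Fin 3)))
    (hD : D = {x : EuclideanSpace ℝ (Fin 3) | x 0 ^ 2 + x 1 ^ 2 < 1 ∧ x 2 = 0})
    (x₀ : ↥(Cᶜ)) (γ : Path x₀ x₀)
    (hdisj : ∀ t : unitInterval, (γ t : EuclideanSpace ℝ (Fin 3)) ∉ D) :
    γ.Homotopic (Path.refl x₀) := by
  exact stmt_17_general two_lt_rank_euclideanSpace_fin_three (euclideanSpace_proj_ne_zero 2)
    zero_le_one (hC.trans (Set.ext fun _ ↦ and_congr_left sq_add_sq_eq_one_iff_norm_eq_one))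
    (hD.trans (Set.ext fun _ ↦ and_congr_left sq_add_sq_lt_one_iff_norm_lt_one)) γ hdisj
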